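/- arXiv:2506.02318 — 2 statements merged into one kernel-verified Lean document; each statement's English description precedes it below -/
import Mathlib

section
/- For every ε ∈ (0,1) and every t ≥ 0, the cross-entropy of the forward marginal against the surrogate product distribution equals exactly: ∑_{x ∈ X} q_t x · Real.log (p_init x) = ∑_{i : Fin d} [ (1 − q̄_i) · ( (1 − exp(−t)) · Real.log (1 − ε) + exp(−t) · Real.log (ε/(S − 1)) ) + q̄_i · Real.log (1 − ε) ], where q̄_i := ∑_{x0 ∈ X, x0 i = m} q0 x0 and p_init x = ∏_{i : Fin d} ((1 − ε) if x i = m, and ε/(S − 1) if x i ≠ m). -/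
open Finset

/-- Per-token absorbing transition kernel. -/
noncomputable def absK (S : ℕ) (m : Fin S) (t : ℝ) (a b : Fin S) : ℝ :=
  if a = b then (if a = m then 1 else Real.exp (-t))
  else (if b = m then 1 - Real.exp (-t) else 0)

/-- Forward marginal at time `t` of the absorbing diffusion started at `q0`. -/
noncomputable def fwd (S d : ℕ) (m : Fin S) (q0 : (Fin d → Fin S) → ℝ) (t : ℝ)
    (x : Fin d → Fin S) : ℝ :=
  ∑ x0 : Fin d → Fin S, q0 x0 * ∏ i : Fin d, absK S m t (x0 i) (x i)

/-- Number of masked coordinates. -/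
def nmask (S d : ℕ) (m : Fin S) (x : Fin d → Fin S) : ℕ :=
  (Finset.univ.filter (fun i => x i = m)).card

/-- Surrogate initialization (product) distribution with parameter `ε`. -/
noncomputable def pinit (S d : ℕ) (m : Fin S) (ε : ℝ) (x : Fin d → Fin S) : ℝ :=
  ∏ i : Fin d, (if x i = m then 1 - ε else ε / ((S : ℝ) - 1))

/-!
The logarithm of the surrogate is a sum of one-token terms, so its expectation under the forward
marginal only involves the one-token marginals: the kernels of the other tokens sum to one. A token
that starts unmasked is masked at time `t` with probability `1 - exp (-t)`, and a masked one stays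
masked.
-/

section ProductWeights

variable {ι R : Type*} [Fintype ι] [DecidableEq ι] [CommSemiring R]
  {α : ι → Type*} [∀ i, Fintype (α i)]

theorem sum_prod_mul_apply (w : ∀ i, α i → R) (i : ι) (hw : ∀ j ≠ i, ∑ a, w j a = 1)
    (f : α i → R) :
    ∑ x : ∀ j, α j, (∏ j, w j (x j)) * f (x i) = ∑ a, w i a * f a := by
  -- Absorbing `f` into the `i`-th factor makes the summand a product over the coordinates.
  let v : ∀ j, α j → R := Function.update w i fun a => w i a * f a
  have hv_self : v i = fun a => w i a * f a := Function.update_self ..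
  have hv_ne : ∀ j ≠ i, v j = w j := fun j hj => Function.update_of_ne hj ..
  have hprod (x : ∀ j, α j) : (∏ j, w j (x j)) * f (x i) = ∏ j, v j (x j) := by
    rw [Fintype.prod_eq_mul_prod_compl i, Fintype.prod_eq_mul_prod_compl i, hv_self,
      mul_right_comm]
    congr 1
    refine prod_congr rfl fun j hj => ?_
    rw [hv_ne j (by simpa using hj)]
  calc ∑ x : ∀ j, α j, (∏ j, w j (x j)) * f (x i)
      = ∏ j, ∑ a, v j a := by simp only [hprod, Fintype.prod_sum]
    _ = ∑ a, v i a := Fintype.prod_eq_single i fun j hj => by rw [hv_ne j hj, hw j hj]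
    _ = ∑ a, w i a * f a := by rw [hv_self]

theorem sum_prod_mul_sum_apply (w : ∀ i, α i → R) (hw : ∀ i, ∑ a, w i a = 1)
    (f : ∀ i, α i → R) :
    ∑ x : ∀ i, α i, (∏ i, w i (x i)) * ∑ i, f i (x i) = ∑ i, ∑ a, w i a * f i a := by
  simp only [mul_sum]
  rw [sum_comm]
  exact sum_congr rfl fun i _ => sum_prod_mul_apply w i (fun j _ => hw j) (f i)

end ProductWeights

theorem sum_mul_ite_const {ι R : Type*} [CommRing R] (s : Finset ι) (p : ι → Prop)
    [DecidablePred p] (q : ι → R) (u v : R) :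
    ∑ x ∈ s, q x * (if p x then u else v)
      = (∑ x ∈ s, q x - ∑ x ∈ s with p x, q x) * v + (∑ x ∈ s with p x, q x) * u := by
  rw [← sum_filter_add_sum_filter_not s p q, add_sub_cancel_left, sum_mul, sum_mul, add_comm]
  simp only [mul_ite, sum_ite]

section Absorbing

variable {S d : ℕ} (m : Fin S) (t : ℝ)

theorem sum_absK_mul (a : Fin S) (f : Fin S → ℝ) :
    ∑ b, absK S m t a b * f b
      = if a = m then f m else (1 - Real.exp (-t)) * f m + Real.exp (-t) * f a := by
  split_ifs with ha
  · have habsK (b : Fin S) : absK S m t a b = if m = b then 1 else 0 := by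
      unfold absK
      grind
    simp only [habsK, ite_mul, one_mul, zero_mul, sum_ite_eq, mem_univ, if_true]
  · have habsK (b : Fin S) : absK S m t a b
        = (if m = b then 1 - Real.exp (-t) else 0) + (if a = b then Real.exp (-t) else 0) := by
      unfold absK
      grind
    simp only [habsK, add_mul, ite_mul, zero_mul, sum_add_distrib, sum_ite_eq, mem_univ, if_true]

theorem sum_absK (a : Fin S) : ∑ b, absK S m t a b = 1 := by
  simpa using sum_absK_mul m t a 1

theorem sum_fwd_mul_sum_apply (q0 : (Fin d → Fin S) → ℝ) (f : Fin d → Fin S → ℝ) :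
    ∑ x, fwd S d m q0 t x * ∑ i, f i (x i)
      = ∑ i, ∑ x0, q0 x0 * ∑ b, absK S m t (x0 i) b * f i b := by
  calc ∑ x, fwd S d m q0 t x * ∑ i, f i (x i)
      = ∑ x0, q0 x0 * ∑ x : Fin d → Fin S,
          (∏ i, absK S m t (x0 i) (x i)) * ∑ i, f i (x i) := by
        simp only [fwd, sum_mul _ _ (∑ _, _), mul_assoc, mul_sum univ _ (q0 _)]
        exact sum_comm
    _ = ∑ x0, q0 x0 * ∑ i, ∑ b, absK S m t (x0 i) b * f i b :=
        sum_congr rfl fun x0 _ => congrArg (q0 x0 * ·) <|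
          sum_prod_mul_sum_apply (fun i => absK S m t (x0 i)) (fun i => sum_absK m t (x0 i)) f
    _ = ∑ i, ∑ x0, q0 x0 * ∑ b, absK S m t (x0 i) b * f i b := by
        simp only [mul_sum univ _ (q0 _)]
        exact sum_comm

theorem log_pinit (hS : 2 ≤ S) {ε : ℝ} (hε₀ : ε ≠ 0) (hε₁ : ε ≠ 1) (x : Fin d → Fin S) :
    Real.log (pinit S d m ε x)
      = ∑ i, if x i = m then Real.log (1 - ε) else Real.log (ε / ((S : ℝ) - 1)) := by
  have hS' : (S : ℝ) - 1 ≠ 0 := sub_ne_zero.2 (by exact_mod_cast (by lia : S ≠ 1))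
  have hfactor (i : Fin d) : (if x i = m then 1 - ε else ε / ((S : ℝ) - 1)) ≠ 0 := by
    split_ifs
    exacts [sub_ne_zero.2 hε₁.symm, div_ne_zero hε₀ hS']
  simp only [pinit, Real.log_prod fun i _ => hfactor i, apply_ite Real.log]

theorem absorbing_cross_entropy_eq_general (hS : 2 ≤ S) (q0 : (Fin d → Fin S) → ℝ) {ε : ℝ}
    (hε₀ : 0 < ε) (hε₁ : ε < 1) :
    ∑ x, fwd S d m q0 t x * Real.log (pinit S d m ε x)
      = ∑ i, ((∑ x0, q0 x0 - ∑ x0 with x0 i = m, q0 x0)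
            * ((1 - Real.exp (-t)) * Real.log (1 - ε)
                + Real.exp (-t) * Real.log (ε / ((S : ℝ) - 1)))
          + (∑ x0 with x0 i = m, q0 x0) * Real.log (1 - ε)) := by
  let logToken (b : Fin S) : ℝ :=
    if b = m then Real.log (1 - ε) else Real.log (ε / ((S : ℝ) - 1))
  have hrow (a : Fin S) : ∑ b, absK S m t a b * logToken b
      = if a = m then Real.log (1 - ε) else
          (1 - Real.exp (-t)) * Real.log (1 - ε)
            + Real.exp (-t) * Real.log (ε / ((S : ℝ) - 1)) := by
    rw [sum_absK_mul]
    split_ifs with ha <;> simp [logToken, ha]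
  calc ∑ x, fwd S d m q0 t x * Real.log (pinit S d m ε x)
      = ∑ x, fwd S d m q0 t x * ∑ i, logToken (x i) := by
        simp only [log_pinit m hS hε₀.ne' hε₁.ne, logToken]
    _ = ∑ i, ∑ x0, q0 x0 * ∑ b, absK S m t (x0 i) b * logToken b :=
        sum_fwd_mul_sum_apply m t q0 fun _ => logToken
    _ = _ := by simp only [hrow, sum_mul_ite_const]

end Absorbing

/-- Exact expression for the cross-entropy of the forward marginal against the
surrogate product distribution. -/
theorem absorbing_cross_entropy_eq (S d : ℕ) (hS : 2 ≤ S) (hd : 1 ≤ d) (m : Fin S)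
    (q0 : (Fin d → Fin S) → ℝ) (hq0 : ∀ x, 0 ≤ q0 x)
    (hq0sum : ∑ x : Fin d → Fin S, q0 x = 1) :
    ∀ ε : ℝ, 0 < ε → ε < 1 → ∀ t : ℝ, 0 ≤ t →
      ∑ x : Fin d → Fin S, fwd S d m q0 t x * Real.log (pinit S d m ε x)
        = ∑ i : Fin d,
            ((1 - ∑ x0 ∈ Finset.univ.filter (fun x0 : Fin d → Fin S => x0 i = m), q0 x0)
                * ((1 - Real.exp (-t)) * Real.log (1 - ε)
                    + Real.exp (-t) * Real.log (ε / ((S : ℝ) - 1)))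
              + (∑ x0 ∈ Finset.univ.filter (fun x0 : Fin d → Fin S => x0 i = m), q0 x0)
                  * Real.log (1 - ε)) := by
  intro ε hε₀ hε₁ t _
  simpa only [hq0sum] using absorbing_cross_entropy_eq_general m t hS q0 hε₀ hε₁
end

section
/- Let t > 0 and let (x, y) be an admissible reverse transition (x and y differ in exactly one coordinate j, with x j = m and y j ≠ m). Then the score is bounded above: q_t y · (Real.exp t − 1) ≤ q_t x, and consequently t · q_t y ≤ q_t x. In particular, if q_t x > 0 then q_t(y)/q_t(x) ≤ 1/(e^t − 1) ≤ 1/t. -/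
open Finset

/-!
Conditioned on the initial state, the coordinates evolve independently, so masking the single
coordinate `j` changes one factor of each product kernel. An unmasked value at `j` must be the
initial one and has survived with probability `e⁻ᵗ`; the same initial value is masked with
probability `1 - e⁻ᵗ = e⁻ᵗ (eᵗ - 1)`. Comparing termwise and averaging over the initial state gives
the bound.
-/

section Product

variable {ι R : Type*} [CommSemiring R] [PartialOrder R] [IsOrderedRing R]

theorem prod_mul_le_prod_of_eq_off {s : Finset ι} {f g : ι → R} {c : R} {j : ι} (hj : j ∈ s)
    (hf : ∀ i ∈ s, i ≠ j → 0 ≤ f i) (hfg : ∀ i ∈ s, i ≠ j → f i = g i) (hc : f j * c ≤ g j) :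
    (∏ i ∈ s, f i) * c ≤ ∏ i ∈ s, g i := by
  classical
  have hrest_nonneg : 0 ≤ ∏ i ∈ s.erase j, f i :=
    prod_nonneg fun i hi => hf i (mem_of_mem_erase hi) (ne_of_mem_erase hi)
  have hrest_eq : ∏ i ∈ s.erase j, f i = ∏ i ∈ s.erase j, g i :=
    prod_congr rfl fun i hi => hfg i (mem_of_mem_erase hi) (ne_of_mem_erase hi)
  calc (∏ i ∈ s, f i) * c
      = f j * c * ∏ i ∈ s.erase j, f i := by rw [← mul_prod_erase s f hj, mul_right_comm]
    _ ≤ g j * ∏ i ∈ s.erase j, f i := mul_le_mul_of_nonneg_right hc hrest_nonneg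
    _ = ∏ i ∈ s, g i := by rw [hrest_eq, mul_prod_erase s g hj]

end Product

section Kernel

variable {S : ℕ} {m : Fin S} {t : ℝ}

theorem absK_nonneg (ht : 0 ≤ t) (a b : Fin S) : 0 ≤ absK S m t a b := by
  have hexp_le : Real.exp (-t) ≤ 1 := Real.exp_le_one_iff.mpr (neg_nonpos.mpr ht)
  have hexp_nonneg : 0 ≤ Real.exp (-t) := Real.exp_nonneg _
  unfold absK
  split_ifs <;> linarith

theorem absK_self {a : Fin S} (ha : a ≠ m) : absK S m t a a = Real.exp (-t) := by
  simp [absK, ha]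

theorem absK_mask {a : Fin S} (ha : a ≠ m) : absK S m t a m = 1 - Real.exp (-t) := by
  simp [absK, ha]

theorem absK_eq_zero {a b : Fin S} (hab : a ≠ b) (hb : b ≠ m) : absK S m t a b = 0 := by
  simp [absK, hab, hb]

theorem absK_mul_exp_sub_one_le_absK_mask (ht : 0 ≤ t) (a : Fin S) {b : Fin S} (hb : b ≠ m) :
    absK S m t a b * (Real.exp t - 1) ≤ absK S m t a m := by
  rcases eq_or_ne a b with rfl | hab
  · rw [absK_self hb, absK_mask hb, mul_sub, ← Real.exp_add, neg_add_cancel, Real.exp_zero, mul_one]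
  · rw [absK_eq_zero hab hb, zero_mul]
    exact absK_nonneg ht a m

end Kernel

section Marginal

variable {S d : ℕ} {m : Fin S} {q0 : (Fin d → Fin S) → ℝ} {t : ℝ}

theorem fwd_nonneg (hq0 : ∀ x, 0 ≤ q0 x) (ht : 0 ≤ t) (x : Fin d → Fin S) :
    0 ≤ fwd S d m q0 t x :=
  sum_nonneg fun x0 _ => mul_nonneg (hq0 x0) (prod_nonneg fun _ _ => absK_nonneg ht _ _)

theorem fwd_mul_exp_sub_one_le_fwd (hq0 : ∀ x, 0 ≤ q0 x) (ht : 0 ≤ t) {x y : Fin d → Fin S}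
    {j : Fin d} (hxj : x j = m) (hyj : y j ≠ m) (hoff : ∀ i, i ≠ j → x i = y i) :
    fwd S d m q0 t y * (Real.exp t - 1) ≤ fwd S d m q0 t x := by
  have hprod (x0 : Fin d → Fin S) :
      (∏ i, absK S m t (x0 i) (y i)) * (Real.exp t - 1) ≤ ∏ i, absK S m t (x0 i) (x i) := by
    refine prod_mul_le_prod_of_eq_off (mem_univ j) (fun i _ _ => absK_nonneg ht _ _)
      (fun i _ hij => by rw [hoff i hij]) ?_
    rw [hxj]
    exact absK_mul_exp_sub_one_le_absK_mask ht (x0 j) hyj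
  calc fwd S d m q0 t y * (Real.exp t - 1)
      = ∑ x0, q0 x0 * ((∏ i, absK S m t (x0 i) (y i)) * (Real.exp t - 1)) := by
        simp only [fwd, sum_mul, mul_assoc]
    _ ≤ fwd S d m q0 t x :=
        sum_le_sum fun x0 _ => mul_le_mul_of_nonneg_left (hprod x0) (hq0 x0)

end Marginal

/-- Score upper bound for admissible reverse transitions under the absorbing rate:
`q_t(y)/q_t(x) ≤ 1/(e^t - 1) ≤ 1/t`. -/
theorem absorbing_score_upper_bound (S d : ℕ) (hS : 2 ≤ S) (hd : 1 ≤ d) (m : Fin S)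
    (q0 : (Fin d → Fin S) → ℝ) (hq0 : ∀ x, 0 ≤ q0 x)
    (hq0sum : ∑ x : Fin d → Fin S, q0 x = 1)
    (t : ℝ) (ht : 0 < t) (x y : Fin d → Fin S) (j : Fin d)
    (hxj : x j = m) (hyj : y j ≠ m) (hoff : ∀ i : Fin d, i ≠ j → x i = y i) :
    fwd S d m q0 t y * (Real.exp t - 1) ≤ fwd S d m q0 t x ∧
      t * fwd S d m q0 t y ≤ fwd S d m q0 t x := by
  have hscore : fwd S d m q0 t y * (Real.exp t - 1) ≤ fwd S d m q0 t x :=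
    fwd_mul_exp_sub_one_le_fwd hq0 ht.le hxj hyj hoff
  have hlinear : t ≤ Real.exp t - 1 := le_sub_iff_add_le.mpr (Real.add_one_le_exp t)
  refine ⟨hscore, ?_⟩
  calc t * fwd S d m q0 t y
      ≤ (Real.exp t - 1) * fwd S d m q0 t y :=
        mul_le_mul_of_nonneg_right hlinear (fwd_nonneg hq0 ht.le y)
    _ = fwd S d m q0 t y * (Real.exp t - 1) := mul_comm _ _
    _ ≤ fwd S d m q0 t x := hscore
end
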